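/- arXiv:2103.15539 — 5 statements merged into one kernel-verified Lean document; each statement's English description precedes it below -/
import Mathlib

section
/- The 30-letter relation word cabbabacabbabacbcababbacababba of Thompson's group V acts as the identity on C: applying, in order (left to right), the maps c, a, b, b, a, b, a, c, a, b, b, a, b, a, c, b, c, a, b, a, b, b, a, c, a, b, a, b, b, a to any infinite binary sequence x returns x. -/
/-- Cantor space of infinite binary sequences, `false` representing 0 and `true` representing 1. -/
abbrev Cantor : Type := ℕ → Bool

/-- Generator `a` of Thompson's V: 00x ↦ 01x, 01x ↦ 00x, 1x ↦ 1x. -/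
def genA (x : Cantor) : Cantor :=
  if x 0 = false then (fun n => if n = 1 then !x 1 else x n) else x

/-- Generator `b` of Thompson's V: 01x ↦ 10x, 10x ↦ 11x, 11x ↦ 01x, 00x ↦ 00x. -/
def genB (x : Cantor) : Cantor := fun n =>
  if n = 0 then
    match x 0, x 1 with
    | false, false => false
    | false, true  => true
    | true,  false => true
    | true,  true  => false
  else if n = 1 then
    match x 0, x 1 with
    | false, false => false
    | false, true  => false
    | true,  false => true
    | true,  true  => true
  else x n

/-- Generator `c` of Thompson's V: 00x ↦ 1x, 1x ↦ 00x, 01x ↦ 01x. -/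
def genC (x : Cantor) : Cantor :=
  if x 0 = true then (fun n => if n ≤ 1 then false else x (n - 1))
  else if x 1 = false then (fun n => if n = 0 then true else x (n + 1))
  else x

/-- Apply a word of maps left to right (leftmost letter first). -/
def applyWord (l : List (Cantor → Cantor)) (x : Cantor) : Cantor :=
  l.foldl (fun y f => f y) x

/-- Prefix a bit to a sequence. -/
def consBit (b : Bool) (x : Cantor) : Cantor := fun n => Nat.casesOn n b x

theorem genA_one (x : Cantor) : genA (consBit true x) = consBit true x := rfl

theorem genA_zero (b : Bool) (x : Cantor) :
    genA (consBit false (consBit b x)) = consBit false (consBit (!b) x) := by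
  funext n
  rcases n with _ | _ | n <;> simp [genA, consBit]

theorem genB_zz (x : Cantor) :
    genB (consBit false (consBit false x)) = consBit false (consBit false x) := by
  funext n
  rcases n with _ | _ | n <;> simp [genB, consBit]

theorem genB_zo (x : Cantor) :
    genB (consBit false (consBit true x)) = consBit true (consBit false x) := by
  funext n
  rcases n with _ | _ | n <;> simp [genB, consBit]

theorem genB_oz (x : Cantor) :
    genB (consBit true (consBit false x)) = consBit true (consBit true x) := by
  funext n
  rcases n with _ | _ | n <;> simp [genB, consBit]

theorem genB_oo (x : Cantor) :
    genB (consBit true (consBit true x)) = consBit false (consBit true x) := by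
  funext n
  rcases n with _ | _ | n <;> simp [genB, consBit]

theorem genC_one (x : Cantor) :
    genC (consBit true x) = consBit false (consBit false x) := by
  funext n
  rcases n with _ | _ | n <;> simp [genC, consBit]

theorem genC_zz (x : Cantor) :
    genC (consBit false (consBit false x)) = consBit true x := by
  funext n
  rcases n with _ | n <;> simp [genC, consBit]

theorem genC_zo (x : Cantor) :
    genC (consBit false (consBit true x)) = consBit false (consBit true x) := by
  simp [genC, consBit]

/-- The 30-letter relation cabbabacabbabacbcababbacababba acts as the identity. -/
theorem relation_cabbabacabbabacbcababbacababba : ∀ x : Cantor,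
    applyWord [genC, genA, genB, genB, genA, genB, genA, genC, genA, genB,
               genB, genA, genB, genA, genC, genB, genC, genA, genB, genA,
               genB, genB, genA, genC, genA, genB, genA, genB, genB, genA] x = x := by
  intro x
  obtain ⟨p, q, r, s, y, rfl⟩ : ∃ p q r s y,
      x = consBit p (consBit q (consBit r (consBit s y))) :=
    ⟨x 0, x 1, x 2, x 3, fun n => x (n + 4), by
      funext n
      rcases n with _ | _ | _ | _ | n <;> rfl⟩
  simp only [applyWord, List.foldl_cons, List.foldl_nil]
  cases p <;> cases q <;> cases r <;> cases s <;>
    simp only [genA_one, genA_zero, genB_zz, genB_zo, genB_oz, genB_oo,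
      genC_one, genC_zz, genC_zo, Bool.not_true, Bool.not_false]
end

section
/- The 34-letter relation word acbcbabbcbbcbcabcbbcabbacbbcbcbabb of Thompson's group V acts as the identity on C: applying, in order (left to right), the maps a, c, b, c, b, a, b, b, c, b, b, c, b, c, a, b, c, b, b, c, a, b, b, a, c, b, b, c, b, c, b, a, b, b to any infinite binary sequence x returns x. -/
namespace VRel

/-- Prepend a bit. -/
def cons (b : Bool) (x : Cantor) : Cantor := fun n => Nat.casesOn n b x

theorem eta (x : Cantor) : x = cons (x 0) (fun n => x (n + 1)) := by
  funext n; cases n <;> rfl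

theorem exists_cons (x : Cantor) : ∃ b y, x = cons b y := ⟨_, _, eta x⟩

theorem a00 (x : Cantor) : genA (cons false (cons false x)) = cons false (cons true x) := by
  funext n; rcases n with _ | _ | n <;> simp [genA, cons]
theorem a01 (x : Cantor) : genA (cons false (cons true x)) = cons false (cons false x) := by
  funext n; rcases n with _ | _ | n <;> simp [genA, cons]
theorem a1 (x : Cantor) : genA (cons true x) = cons true x := by
  simp [genA, cons]
theorem b00 (x : Cantor) : genB (cons false (cons false x)) = cons false (cons false x) := by
  funext n; rcases n with _ | _ | n <;> simp [genB, cons]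
theorem b01 (x : Cantor) : genB (cons false (cons true x)) = cons true (cons false x) := by
  funext n; rcases n with _ | _ | n <;> simp [genB, cons]
theorem b10 (x : Cantor) : genB (cons true (cons false x)) = cons true (cons true x) := by
  funext n; rcases n with _ | _ | n <;> simp [genB, cons]
theorem b11 (x : Cantor) : genB (cons true (cons true x)) = cons false (cons true x) := by
  funext n; rcases n with _ | _ | n <;> simp [genB, cons]
theorem c00 (x : Cantor) : genC (cons false (cons false x)) = cons true x := by
  funext n; rcases n with _ | n <;> simp [genC, cons]
theorem c1 (x : Cantor) : genC (cons true x) = cons false (cons false x) := by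
  funext n; rcases n with _ | _ | n <;> simp [genC, cons]
theorem c01 (x : Cantor) : genC (cons false (cons true x)) = cons false (cons true x) := by
  simp [genC, cons]

end VRel

/-- The 34-letter relation acbcbabbcbbcbcabcbbcabbacbbcbcbabb acts as the identity. -/
theorem relation_acbcbabbcbbcbcabcbbcabbacbbcbcbabb : ∀ x : Cantor,
    applyWord [genA, genC, genB, genC, genB, genA, genB, genB, genC, genB,
               genB, genC, genB, genC, genA, genB, genC, genB, genB, genC,
               genA, genB, genB, genA, genC, genB, genB, genC, genB, genC,
               genB, genA, genB, genB] x = x := by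
  intro x
  obtain ⟨b0, x, rfl⟩ := VRel.exists_cons x
  obtain ⟨b1, x, rfl⟩ := VRel.exists_cons x
  obtain ⟨b2, x, rfl⟩ := VRel.exists_cons x
  obtain ⟨b3, x, rfl⟩ := VRel.exists_cons x
  obtain ⟨b4, x, rfl⟩ := VRel.exists_cons x
  obtain ⟨b5, x, rfl⟩ := VRel.exists_cons x
  cases b0 <;> cases b1 <;> cases b2 <;> cases b3 <;> cases b4 <;> cases b5 <;>
    simp only [applyWord, List.foldl, VRel.a00, VRel.a01, VRel.a1, VRel.b00, VRel.b01,
      VRel.b10, VRel.b11, VRel.c00, VRel.c01, VRel.c1]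
end

section
/- The local rule for the generator a covers every cell of every configuration exactly once: for every x ∈ X and every position i ∈ ℤ, there exist a unique triple (u,v,w) ∈ R_a and a unique j ∈ ℤ such that the word uvw (concatenation) occurs in x starting at position j and j + |u| ≤ i < j + |u| + |v|. -/
/-- A finite word over the alphabet {0,1,2}. -/
abbrev Word : Type := List (Fin 3)

/-- Membership in the vertex shift `X` defined by the matrix [[1,1,0],[1,1,1],[1,1,1]]:
the word 02 never occurs. -/
def inVertexShift (x : ℤ → Fin 3) : Prop :=
  ∀ n : ℤ, x n = 0 → x (n + 1) ≠ 2

/-- The word `u` occurs in `x` starting at position `j`. -/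
def occursAt (u : Word) (x : ℤ → Fin 3) (j : ℤ) : Prop :=
  ∀ k : ℕ, k < u.length → x (j + (k : ℤ)) = u.getD k 0

/-- Embed a binary symbol of `Fin 2` into `Fin 3`. -/
def emb (α : Fin 2) : Fin 3 := α.castLE (by norm_num)

/-- The local rule for the generator a: the set of triples u(v)w. -/
def Ra : Set (Word × Word × Word) :=
  {t | (∃ α β γ : Fin 2, t = ([emb α, emb β], [emb γ], [])) ∨
       t = ([], [2], [2]) ∨
       t = ([], [2, 0, 0], []) ∨
       (∃ α : Fin 2, t = ([], [2, 0, 1], [emb α])) ∨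
       t = ([], [2, 0, 1], [2]) ∨
       t = ([], [2, 1], [2]) ∨
       (∃ α : Fin 2, t = ([], [2, 1, emb α], []))}

theorem emb_ne (α : Fin 2) : emb α ≠ 2 := by
  revert α; decide

theorem exists_emb (y : Fin 3) (h : y ≠ 2) : ∃ α, y = emb α := by
  revert y; decide

/-- The cells `j, j+1, j+2, j+3` with a block of the rule starting by the symbol 2 at `j`. -/
def Blk (x : ℤ → Fin 3) (t : Word × Word × Word) (j i : ℤ) : Prop :=
  (x j = 2 ∧ x (j+1) = 2 ∧ t = ([], [2], [2]) ∧ i = j) ∨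
  (x j = 2 ∧ x (j+1) = 0 ∧ x (j+2) = 0 ∧ t = ([], [2,0,0], []) ∧ (i = j ∨ i = j+1 ∨ i = j+2)) ∨
  (x j = 2 ∧ x (j+1) = 0 ∧ x (j+2) = 1 ∧ t = ([], [2,0,1], [x (j+3)]) ∧
    (i = j ∨ i = j+1 ∨ i = j+2)) ∨
  (x j = 2 ∧ x (j+1) = 1 ∧ x (j+2) = 2 ∧ t = ([], [2,1], [2]) ∧ (i = j ∨ i = j+1)) ∨
  (x j = 2 ∧ x (j+1) = 1 ∧ x (j+2) ≠ 2 ∧ t = ([], [2,1,x (j+2)], []) ∧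
    (i = j ∨ i = j+1 ∨ i = j+2))

theorem occ1 (a b : Fin 3) (x : ℤ → Fin 3) (j : ℤ) :
    occursAt [a, b] x j ↔ x j = a ∧ x (j+1) = b := by
  constructor
  · intro h
    exact ⟨by simpa using h 0 (by simp), by simpa using h 1 (by simp)⟩
  · rintro ⟨h0, h1⟩ k hk
    simp at hk
    interval_cases k <;> simp [*]

theorem occ2 (a b c : Fin 3) (x : ℤ → Fin 3) (j : ℤ) :
    occursAt [a, b, c] x j ↔ x j = a ∧ x (j+1) = b ∧ x (j+2) = c := by
  constructor
  · intro h
    exact ⟨by simpa using h 0 (by simp), by simpa using h 1 (by simp), by simpa using h 2 (by simp)⟩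
  · rintro ⟨h0, h1, h2⟩ k hk
    simp at hk
    interval_cases k <;> simp [*]

theorem occ3 (a b c d : Fin 3) (x : ℤ → Fin 3) (j : ℤ) :
    occursAt [a, b, c, d] x j ↔ x j = a ∧ x (j+1) = b ∧ x (j+2) = c ∧ x (j+3) = d := by
  constructor
  · intro h
    exact ⟨by simpa using h 0 (by simp), by simpa using h 1 (by simp), by simpa using h 2 (by simp),
      by simpa using h 3 (by simp)⟩
  · rintro ⟨h0, h1, h2, h3⟩ k hk
    simp at hk
    interval_cases k <;> simp [*]

theorem flat (x : ℤ → Fin 3) (t : Word × Word × Word) (j i : ℤ) :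
    (t ∈ Ra ∧ occursAt (t.1 ++ t.2.1 ++ t.2.2) x j ∧
      j + (t.1.length : ℤ) ≤ i ∧ i < j + (t.1.length : ℤ) + (t.2.1.length : ℤ)) ↔
    (x j ≠ 2 ∧ x (j+1) ≠ 2 ∧ x (j+2) ≠ 2 ∧ t = ([x j, x (j+1)], [x (j+2)], []) ∧ i = j+2) ∨
    Blk x t j i := by
  constructor
  · rintro ⟨h, ho, h1, h2⟩
    rcases h with ⟨α, β, γ, rfl⟩ | rfl | rfl | ⟨α, rfl⟩ | rfl | rfl | ⟨α, rfl⟩ <;>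
      simp [occ1, occ2, occ3] at ho h1 h2
    · left
      obtain ⟨a, b, c⟩ := ho
      rw [a, b, c]
      exact ⟨emb_ne _, emb_ne _, emb_ne _, rfl, by omega⟩
    · right; left; exact ⟨ho.1, ho.2, rfl, by omega⟩
    · right; right; left; exact ⟨ho.1, ho.2.1, ho.2.2, rfl, by omega⟩
    · right; right; right; left; exact ⟨ho.1, ho.2.1, ho.2.2.1, by rw [ho.2.2.2], by omega⟩
    · right; right; right; left; exact ⟨ho.1, ho.2.1, ho.2.2.1, by rw [ho.2.2.2], by omega⟩
    · right; right; right; right; left; exact ⟨ho.1, ho.2.1, ho.2.2, rfl, by omega⟩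
    · right; right; right; right; right
      exact ⟨ho.1, ho.2.1, by rw [ho.2.2]; exact emb_ne _, by rw [ho.2.2], by omega⟩
  · rintro (⟨a, b, c, rfl, h⟩ | ⟨a, b, rfl, h⟩ | ⟨a, b, c, rfl, h⟩ | ⟨a, b, c, rfl, h⟩ |
      ⟨a, b, c, rfl, h⟩ | ⟨a, b, c, rfl, h⟩)
    · obtain ⟨α, ha⟩ := exists_emb _ a
      obtain ⟨β, hb⟩ := exists_emb _ b
      obtain ⟨γ, hc⟩ := exists_emb _ c
      refine ⟨Or.inl ⟨α, β, γ, by rw [ha, hb, hc]⟩, by simp [occ2], ?_, ?_⟩ <;> simp <;> omega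
    · refine ⟨Or.inr (Or.inl rfl), by simp [occ1, *], ?_, ?_⟩ <;> simp <;> omega
    · refine ⟨Or.inr (Or.inr (Or.inl rfl)), by simp [occ2, *], ?_, ?_⟩ <;> simp <;> omega
    · refine ⟨?_, by simp [occ3, *], ?_, ?_⟩
      · by_cases hd : x (j+3) = 2
        · rw [hd]; simp [Ra]
        · obtain ⟨α, hα⟩ := exists_emb _ hd
          rw [hα]; fin_cases α <;> simp [Ra]
      all_goals simp; omega
    · refine ⟨by simp [Ra], by simp [occ2, *], ?_, ?_⟩ <;> simp <;> omega
    · refine ⟨?_, by simp [occ2, *], ?_, ?_⟩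
      · obtain ⟨α, hα⟩ := exists_emb _ c
        rw [hα]; fin_cases α <;> simp [Ra]
      all_goals simp; omega

/-- Existence of a block starting at a cell with symbol 2. -/
theorem blk_ex (x : ℤ → Fin 3) (hx : inVertexShift x) (j i : ℤ) (h : x j = 2)
    (hi : i = j ∨ (i = j+1 ∧ x (j+1) ≠ 2) ∨ (i = j+2 ∧ x (j+1) ≠ 2 ∧ x (j+2) ≠ 2)) :
    ∃ t, Blk x t j i := by
  have h02 := hx (j+1)
  rw [show j+1+1 = j+2 by ring] at h02
  have h3 : ∀ y : Fin 3, y = 0 ∨ y = 1 ∨ y = 2 := by decide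
  unfold Blk
  rcases h3 (x (j+1)) with h1 | h1 | h1
  · rcases h3 (x (j+2)) with h2 | h2 | h2
    · exact ⟨_, Or.inr (Or.inl ⟨h, h1, h2, rfl, by tauto⟩)⟩
    · exact ⟨_, Or.inr (Or.inr (Or.inl ⟨h, h1, h2, rfl, by tauto⟩))⟩
    · exact absurd h2 (h02 h1)
  · by_cases h2 : x (j+2) = 2
    · exact ⟨_, Or.inr (Or.inr (Or.inr (Or.inl ⟨h, h1, h2, rfl, by tauto⟩)))⟩
    · exact ⟨_, Or.inr (Or.inr (Or.inr (Or.inr ⟨h, h1, h2, rfl, by tauto⟩)))⟩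
  · exact ⟨_, Or.inl ⟨h, h1, rfl, by tauto⟩⟩

theorem blk_pos (x : ℤ → Fin 3) (t : Word × Word × Word) (j i : ℤ) (h : Blk x t j i) :
    x j = 2 ∧ (i = j ∨ (i = j+1 ∧ x (j+1) ≠ 2) ∨ (i = j+2 ∧ x (j+1) ≠ 2 ∧ x (j+2) ≠ 2)) := by
  have e1 : (0 : Fin 3) ≠ 2 := by decide
  have e2 : (1 : Fin 3) ≠ 2 := by decide
  rcases h with ⟨a, b, -, h⟩ | ⟨a, b, c, -, h⟩ | ⟨a, b, c, -, h⟩ | ⟨a, b, c, -, h⟩ | ⟨a, b, c, -, h⟩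
  · exact ⟨a, Or.inl h⟩
  all_goals
    refine ⟨a, ?_⟩
    simp only [b, c, ne_eq, not_true_eq_false, e1, e2, not_false_eq_true, and_true, and_false]
    tauto

theorem blk_uniq (x : ℤ → Fin 3) (t s : Word × Word × Word) (j i : ℤ) (h : Blk x t j i)
    (hhp : Blk x s j i) : t = s := by
  rcases h with ⟨a, b, rfl, h⟩ | ⟨a, b, c, rfl, h⟩ | ⟨a, b, c, rfl, h⟩ | ⟨a, b, c, rfl, h⟩ |
    ⟨a, b, c, rfl, h⟩ <;>
  rcases hhp with ⟨aap, bbp, rfl, hhp⟩ | ⟨aap, bbp, ccp, rfl, hhp⟩ | ⟨aap, bbp, ccp, rfl, hhp⟩ |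
    ⟨aap, bbp, ccp, rfl, hhp⟩ | ⟨aap, bbp, ccp, rfl, hhp⟩ <;>
  first
  | rfl
  | exact absurd (b.symm.trans bbp) (by decide)
  | exact absurd (c.symm.trans ccp) (by decide)
  | exact absurd c ccp
  | exact absurd ccp c

/-- The local rule for a covers every cell of every configuration exactly once. -/
theorem Ra_partitions : ∀ x : ℤ → Fin 3, inVertexShift x → ∀ i : ℤ,
    ∃! p : (Word × Word × Word) × ℤ,
      p.1 ∈ Ra ∧ occursAt (p.1.1 ++ p.1.2.1 ++ p.1.2.2) x p.2 ∧
      p.2 + (p.1.1.length : ℤ) ≤ i ∧ i < p.2 + (p.1.1.length : ℤ) + (p.1.2.1.length : ℤ) := by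
  intro x hx i
  simp only [flat]
  -- uniqueness once a block is known
  have key : ∀ t j, Blk x t j i → ∃! p : (Word × Word × Word) × ℤ,
      (x p.2 ≠ 2 ∧ x (p.2+1) ≠ 2 ∧ x (p.2+2) ≠ 2 ∧
        p.1 = ([x p.2, x (p.2+1)], [x (p.2+2)], []) ∧ i = p.2+2) ∨ Blk x p.1 p.2 i := by
    intro t j h
    refine ⟨(t, j), Or.inr h, ?_⟩
    rintro ⟨s, k⟩ hhp
    dsimp only at hhp
    obtain ⟨a, ha⟩ := blk_pos _ _ _ _ h
    rcases hhp with ⟨n0, n1, n2, -, hi⟩ | hhp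
    · exfalso
      have : j = k ∨ j = k+1 ∨ j = k+2 := by omega
      rcases this with rfl | rfl | rfl <;> contradiction
    · obtain ⟨b, hb⟩ := blk_pos _ _ _ _ hhp
      have hjk : k = j := by
        by_contra hne
        have : j = k+1 ∨ j = k+2 ∨ k = j+1 ∨ k = j+2 := by omega
        rcases this with rfl | rfl | rfl | rfl
        · rcases hb with hb | hb | hb
          · omega
          · exact hb.2 a
          · exact hb.2.1 a
        · rcases hb with hb | hb | hb
          · omega
          · omega
          · exact hb.2.2 a
        · rcases ha with ha | ha | ha
          · omega
          · exact ha.2 b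
          · exact ha.2.1 b
        · rcases ha with ha | ha | ha
          · omega
          · omega
          · exact ha.2.2 b
      subst hjk
      rw [blk_uniq _ _ _ _ _ h hhp]
  by_cases c : x i = 2
  · obtain ⟨t, ht⟩ := blk_ex x hx i i c (Or.inl rfl)
    exact key _ _ ht
  obtain ⟨j, rfl⟩ : ∃ j, i = j+2 := ⟨i-2, by ring⟩
  by_cases b : x (j+1) = 2
  · obtain ⟨t, ht⟩ := blk_ex x hx (j+1) (j+2) b
      (Or.inr (Or.inl ⟨by ring, by rwa [show j+1+1 = j+2 by ring]⟩))
    exact key _ _ ht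
  by_cases a : x j = 2
  · obtain ⟨t, ht⟩ := blk_ex x hx j (j+2) a (Or.inr (Or.inr ⟨rfl, b, c⟩))
    exact key _ _ ht
  refine ⟨(([x j, x (j+1)], [x (j+2)], []), j), Or.inl ⟨a, b, c, rfl, rfl⟩, ?_⟩
  rintro ⟨s, k⟩ hhp
  dsimp only at hhp
  rcases hhp with ⟨-, -, -, rfl, hi⟩ | hhp
  · obtain rfl : j = k := by omega
    rfl
  · exfalso
    obtain ⟨d, hd⟩ := blk_pos _ _ _ _ hhp
    have : k = j ∨ k = j+1 ∨ k = j+2 := by omega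
    rcases this with rfl | rfl | rfl <;> contradiction
end

section
/- The local rule for the generator b covers every cell of every configuration exactly once: for every x ∈ X and every position i ∈ ℤ, there exist a unique triple (u,v,w) ∈ R_b and a unique j ∈ ℤ such that the word uvw (concatenation) occurs in x starting at position j and j + |u| ≤ i < j + |u| + |v|. -/
/-- The local rule for the generator b: the set of triples u(v)w. -/
def Rb : Set (Word × Word × Word) :=
  {t | (∃ α β γ : Fin 2, t = ([emb α, emb β], [emb γ], [])) ∨
       t = ([], [2], [2]) ∨
       t = ([], [2, 0, 0], []) ∨
       (∃ α : Fin 2, t = ([], [2, 0, 1], [emb α])) ∨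
       t = ([], [2, 0, 1], [2]) ∨
       t = ([], [2, 1], [2]) ∨
       (∃ α : Fin 2, t = ([], [2, 1, 0], [emb α])) ∨
       t = ([], [2, 1, 1], [])}

/-- All triples of the rule, as a list. -/
def RbList : List (Word × Word × Word) :=
  [([0,0],[0],[]), ([0,0],[1],[]), ([0,1],[0],[]), ([0,1],[1],[]),
   ([1,0],[0],[]), ([1,0],[1],[]), ([1,1],[0],[]), ([1,1],[1],[]),
   ([],[2],[2]), ([],[2,0,0],[]), ([],[2,0,1],[0]), ([],[2,0,1],[1]), ([],[2,0,1],[2]),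
   ([],[2,1],[2]), ([],[2,1,0],[0]), ([],[2,1,0],[1]), ([],[2,1,1],[])]

theorem mem_RbList (t : Word × Word × Word) : t ∈ Rb ↔ t ∈ RbList := by
  have e0 : emb 0 = 0 := rfl
  have e1 : emb 1 = 1 := rfl
  simp only [Rb, RbList, Set.mem_ofPred_eq, Fin.exists_fin_two, e0, e1, List.mem_cons,
    List.not_mem_nil, or_false, or_assoc]

/-- Candidates: triple plus offset of the occurrence within the window starting at `i - 2`. -/
def candList : List ((Word × Word × Word) × ℕ) :=
  (RbList.product [0, 1, 2]).filter fun c =>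
    decide (c.2 + c.1.1.length ≤ 2 ∧ 2 < c.2 + c.1.1.length + c.1.2.1.length)

theorem cand_len : ∀ t ∈ RbList, (t.1 ++ t.2.1 ++ t.2.2).length ≤ 4 ∧
    t.1.length + t.2.1.length ≤ 3 := by decide

/-- The window match, as a boolean. -/
def wmatch (w : Word) (c : (Word × Word × Word) × ℕ) : Bool :=
  (c.1.1 ++ c.1.2.1 ++ c.1.2.2).isPrefixOf (w.drop c.2)

theorem window_unique : ∀ a b c d e f : Fin 3,
    (a = 0 → b ≠ 2) → (b = 0 → c ≠ 2) → (c = 0 → d ≠ 2) → (d = 0 → e ≠ 2) → (e = 0 → f ≠ 2) →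
    (candList.filter (wmatch [a,b,c,d,e,f])).length = 1 := by
  decide +kernel

theorem occursAt_iff (u : Word) (x : ℤ → Fin 3) (j : ℤ) (w : Word) (h : u.length ≤ w.length)
    (hw : occursAt w x j) : occursAt u x j ↔ u.isPrefixOf w = true := by
  induction u generalizing j w with
  | nil => simp [occursAt]
  | cons a u ih =>
    cases w with
    | nil => simp at h
    | cons b w =>
      have cons_iff : ∀ (a : Fin 3) (u : Word), occursAt (a :: u) x j ↔
          x j = a ∧ occursAt u x (j + 1) := by
        intro a u
        constructor
        · intro H
          refine ⟨by simpa using H 0 (by simp), fun k hk => ?_⟩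
          have := H (k + 1) (by simpa using hk)
          simp only [List.getD_cons_succ] at this
          rw [← this]; congr 1; push_cast; ring
        · rintro ⟨h0, H⟩ k hk
          cases k with
          | zero => simpa using h0
          | succ k =>
            have := H k (by simpa using hk)
            simp only [List.getD_cons_succ]
            rw [← this]; congr 1; push_cast; ring
      obtain ⟨hb, hw'⟩ := (cons_iff b w).1 hw
      rw [cons_iff, ih (j + 1) w (by simpa using h) hw', hb]
      rw [List.isPrefixOf, Bool.and_eq_true, beq_iff_eq, eq_comm]

/-- The local rule for b covers every cell of every configuration exactly once. -/
theorem Rb_partitions : ∀ x : ℤ → Fin 3, inVertexShift x → ∀ i : ℤ,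
    ∃! p : (Word × Word × Word) × ℤ,
      p.1 ∈ Rb ∧ occursAt (p.1.1 ++ p.1.2.1 ++ p.1.2.2) x p.2 ∧
      p.2 + (p.1.1.length : ℤ) ≤ i ∧ i < p.2 + (p.1.1.length : ℤ) + (p.1.2.1.length : ℤ) := by
  intro x hx i
  have key := window_unique (x (i-2)) (x (i-2+1)) (x (i-2+2)) (x (i-2+3)) (x (i-2+4)) (x (i-2+5))
    (hx _) (by have := hx (i-2+1); rwa [show i-2+1+1 = i-2+2 by ring] at this)
    (by have := hx (i-2+2); rwa [show i-2+2+1 = i-2+3 by ring] at this)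
    (by have := hx (i-2+3); rwa [show i-2+3+1 = i-2+4 by ring] at this)
    (by have := hx (i-2+4); rwa [show i-2+4+1 = i-2+5 by ring] at this)
  set w : Word := [x (i-2), x (i-2+1), x (i-2+2), x (i-2+3), x (i-2+4), x (i-2+5)] with hwdef
  have hwl : w.length = 6 := rfl
  have hw : ∀ k : ℕ, k < 6 → x (i - 2 + (k:ℤ)) = w.getD k 0 := by
    intro k hk
    interval_cases k <;> simp [hwdef]
  have hdrop : ∀ o : ℕ, occursAt (w.drop o) x (i - 2 + o) := by
    intro o k hk
    rw [List.length_drop, hwl] at hk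
    have := hw (o + k) (by omega)
    rw [List.getD_eq_getElem?_getD, List.getElem?_drop, ← List.getD_eq_getElem?_getD, ← this]
    congr 1; push_cast; ring
  have bridge : ∀ t : Word × Word × Word, ∀ o : ℕ,
      (t ∈ Rb ∧ occursAt (t.1 ++ t.2.1 ++ t.2.2) x (i - 2 + o) ∧
      (i - 2 + o) + (t.1.length : ℤ) ≤ i ∧
      i < (i - 2 + o) + (t.1.length : ℤ) + (t.2.1.length : ℤ)) ↔
      (t, o) ∈ candList.filter (wmatch w) := by
    intro t o
    rw [List.mem_filter, candList, List.mem_filter, mem_RbList, List.pair_mem_product]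
    simp only [decide_eq_true_eq, wmatch]
    constructor
    · rintro ⟨ht, ho, h1, h2⟩
      have hl := cand_len t ht
      have ho2 : o ≤ 2 := by omega
      refine ⟨⟨⟨ht, by interval_cases o <;> simp⟩, by omega, by omega⟩, ?_⟩
      exact (occursAt_iff _ x _ _ (by rw [List.length_drop, hwl]; omega) (hdrop o)).1 ho
    · rintro ⟨⟨⟨ht, _⟩, h1, h2⟩, hm⟩
      have hl := cand_len t ht
      refine ⟨ht, ?_, by omega, by omega⟩
      exact (occursAt_iff _ x _ _ (by rw [List.length_drop, hwl]; omega) (hdrop o)).2 hm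
  obtain ⟨⟨t, o⟩, hc⟩ := List.length_eq_one_iff.1 key
  refine ⟨(t, i - 2 + o), (bridge t o).2 (by simp [hc]), ?_⟩
  rintro ⟨t', j⟩ hp
  have hl := cand_len t' ((mem_RbList t').1 hp.1)
  have h3 := hp.2.2.2
  simp only at h3
  obtain ⟨o', rfl⟩ : ∃ o' : ℕ, j = i - 2 + o' := ⟨(j - (i - 2)).toNat, by omega⟩
  have := (bridge t' o').1 hp
  rw [hc, List.mem_singleton, Prod.mk.injEq] at this
  rw [this.1, this.2]
end

section
/- The local rule for the generator c covers every cell of every configuration exactly once: for every x ∈ X and every position i ∈ ℤ, there exist a unique triple (u,v,w) ∈ R_c and a unique j ∈ ℤ such that the word uvw (concatenation) occurs in x starting at position j and j + |u| ≤ i < j + |u| + |v|. -/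
/-- The local rule for the generator c: the set of triples u(v)w. -/
def Rc : Set (Word × Word × Word) :=
  {t | (∃ α β : Fin 2, t = ([emb α, 0], [emb β], [])) ∨
       (∃ α : Fin 2, t = ([1], [emb α], [])) ∨
       t = ([], [2], [2]) ∨
       t = ([], [2, 0, 0], []) ∨
       t = ([], [2, 0, 1], []) ∨
       (∃ α : Fin 2, t = ([], [2, 1], [emb α])) ∨
       t = ([], [2, 1], [2])}

/-- The tile covering the centre of the window `a b c d e`, with its offset to the left. -/
def tileOf (a b c d e : Fin 3) : (Word × Word × Word) × ℤ :=
  if c = 2 then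
    if d = 2 then (([], [2], [2]), 0)
    else if d = 0 then (([], [2, 0, e], []), 0)
    else (([], [2, 1], [e]), 0)
  else if b = 1 then (([1], [c], []), 1)
  else if b = 2 then
    if c = 0 then (([], [2, 0, d], []), 1) else (([], [2, 1], [d]), 1)
  else if a = 2 then (([], [2, 0, c], []), 2)
  else (([a, 0], [c], []), 2)

lemma emb_zero : emb 0 = 0 := rfl

lemma emb_one : emb 1 = 1 := rfl

lemma occursAt_nil (x : ℤ → Fin 3) (j : ℤ) : occursAt [] x j ↔ True := by
  simp [occursAt]

lemma occursAt_cons (s : Fin 3) (u : Word) (x : ℤ → Fin 3) (j : ℤ) :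
    occursAt (s :: u) x j ↔ x j = s ∧ occursAt u x (j + 1) := by
  constructor
  · intro h
    refine ⟨by simpa using h 0 (by simp), fun k hk => ?_⟩
    have := h (k + 1) (by simpa using hk)
    rw [List.getD_cons_succ] at this
    rw [← this]
    congr 1
    push_cast
    ring
  · rintro ⟨h0, h⟩ k hk
    cases k with
    | zero => simpa using h0
    | succ k =>
      rw [List.getD_cons_succ, ← h k (by simpa using hk)]
      congr 1
      push_cast
      ring

lemma mem_Rc (t : Word × Word × Word) : t ∈ Rc ↔
    t = ([0, 0], [0], []) ∨ t = ([0, 0], [1], []) ∨ t = ([1, 0], [0], []) ∨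
    t = ([1, 0], [1], []) ∨ t = ([1], [0], []) ∨ t = ([1], [1], []) ∨
    t = ([], [2], [2]) ∨ t = ([], [2, 0, 0], []) ∨ t = ([], [2, 0, 1], []) ∨
    t = ([], [2, 1], [0]) ∨ t = ([], [2, 1], [1]) ∨ t = ([], [2, 1], [2]) := by
  simp only [Rc, Set.mem_ofPred_eq, Fin.exists_fin_two, emb_zero, emb_one, or_assoc]

lemma tile_unique (x : ℤ → Fin 3) (i : ℤ) (t : Word × Word × Word) (j : ℤ)
    (ht : t ∈ Rc) (ho : occursAt (t.1 ++ t.2.1 ++ t.2.2) x j)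
    (h1 : j + (t.1.length : ℤ) ≤ i)
    (h2 : i < j + (t.1.length : ℤ) + (t.2.1.length : ℤ)) :
    t = (tileOf (x (i - 2)) (x (i - 1)) (x i) (x (i + 1)) (x (i + 2))).1 ∧
    j = i - (tileOf (x (i - 2)) (x (i - 1)) (x i) (x (i + 1)) (x (i + 2))).2 := by
  rw [mem_Rc] at ht
  obtain ⟨k, rfl⟩ : ∃ k, i = j + k := ⟨i - j, by ring⟩
  rcases ht with h | h | h | h | h | h | h | h | h | h | h | h <;> subst h <;>
    simp only [List.cons_append, List.nil_append, occursAt_cons,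
      occursAt_nil, and_true, List.length_cons, List.length_nil] at ho h1 h2 <;>
    push_cast at h1 h2 <;>
    have hk0 : 0 ≤ k := by omega
  all_goals
    have hk3 : k < 3 := by omega
    interval_cases k <;> first
      | omega
      | (simp only [add_assoc, add_sub_assoc] at ho ⊢
         norm_num at ho ⊢
         simp [tileOf, ho])

set_option maxHeartbeats 4000000 in
lemma tile_exists (x : ℤ → Fin 3) (hx : inVertexShift x) (i : ℤ) :
    ∃ t j, t ∈ Rc ∧ occursAt (t.1 ++ t.2.1 ++ t.2.2) x j ∧
      j + (t.1.length : ℤ) ≤ i ∧ i < j + (t.1.length : ℤ) + (t.2.1.length : ℤ) := by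
  have e1 : i - 2 + 1 = i - 1 := by ring
  have e2 : i - 1 + 1 = i := by ring
  have e3 : i + 1 + 1 = i + 2 := by ring
  have g1 := hx (i - 2)
  have g2 := hx (i - 1)
  have g3 := hx i
  have g4 := hx (i + 1)
  rw [e1] at g1
  rw [e2] at g2
  rw [e3] at g4
  refine ⟨(tileOf (x (i - 2)) (x (i - 1)) (x i) (x (i + 1)) (x (i + 2))).1,
    i - (tileOf (x (i - 2)) (x (i - 1)) (x i) (x (i + 1)) (x (i + 2))).2, ?_⟩
  rw [mem_Rc]
  generalize ha : x (i - 2) = a at *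
  generalize hb : x (i - 1) = b at *
  generalize hc : x i = c at *
  generalize hd : x (i + 1) = d at *
  generalize he : x (i + 2) = e at *
  fin_cases c <;> fin_cases b <;> fin_cases d <;> fin_cases a <;> fin_cases e <;>
    simp_all [tileOf, occursAt_cons, occursAt_nil]
  all_goals omega

/-- The local rule for c covers every cell of every configuration exactly once. -/
theorem Rc_partitions : ∀ x : ℤ → Fin 3, inVertexShift x → ∀ i : ℤ,
    ∃! p : (Word × Word × Word) × ℤ,
      p.1 ∈ Rc ∧ occursAt (p.1.1 ++ p.1.2.1 ++ p.1.2.2) x p.2 ∧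
      p.2 + (p.1.1.length : ℤ) ≤ i ∧ i < p.2 + (p.1.1.length : ℤ) + (p.1.2.1.length : ℤ) := by
  intro x hx i
  obtain ⟨t, j, h1, h2, h3, h4⟩ := tile_exists x hx i
  refine ⟨(t, j), ⟨h1, h2, h3, h4⟩, ?_⟩
  rintro ⟨t', j'⟩ ⟨k1, k2, k3, k4⟩
  obtain ⟨a1, a2⟩ := tile_unique x i t j h1 h2 h3 h4
  obtain ⟨b1, b2⟩ := tile_unique x i t' j' k1 k2 k3 k4
  exact Prod.ext (b1.trans a1.symm) (b2.trans a2.symm)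
end
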